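/- Let 0 < q < 1, 0 < 2α < n, and let σ be a radially symmetric nonnegative locally finite Borel measure on ℝⁿ. Suppose there exists c > 0 such that Kσ(x) ≤ c (I_{2α}σ(x))^{1/(1-q)} for all sufficiently small |x| ≠ 0, where Kσ(x) = |x|^{-(n-2α)} (∫_{|y|<|x|} |y|^{-(n-2α)q} dσ(y))^{1/(1-q)}. Then limsup_{|x|→0} [ |x|^{-(n-2α)(1-q)} ∫_{B(0,|x|)} |y|^{-(n-2α)q} dσ(y) ] / [ ∫_{|y|≥|x|} |y|^{-(n-2α)} dσ(y) ] < ∞. -/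

import Mathlib

open MeasureTheory Metric Set Filter

/-- The Riesz potential `I_{2α}σ(x) = ∫_0^∞ σ(B(x,r))/r^{n-2α} dr/r`. -/
noncomputable def riesz2 {n : ℕ} (α : ℝ)
    (σ : Measure (EuclideanSpace ℝ (Fin n)))
    (x : EuclideanSpace ℝ (Fin n)) : ENNReal :=
  ∫⁻ r in Ioi (0:ℝ),
    σ (ball x r) / ENNReal.ofReal (r ^ ((n : ℝ) - 2 * α)) / ENNReal.ofReal r

/-- `Kσ(x) = |x|^{-(n-2α)} (∫_{|y|<|x|} |y|^{-(n-2α)q} dσ(y))^{1/(1-q)}`. -/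
noncomputable def Kpot {n : ℕ} (α q : ℝ)
    (σ : Measure (EuclideanSpace ℝ (Fin n)))
    (x : EuclideanSpace ℝ (Fin n)) : ENNReal :=
  (∫⁻ y in ball (0 : EuclideanSpace ℝ (Fin n)) ‖x‖,
      (ENNReal.ofReal (‖y‖ ^ (((n : ℝ) - 2 * α) * q)))⁻¹ ∂σ) ^ (1 / (1 - q)) /
    ENNReal.ofReal (‖x‖ ^ ((n : ℝ) - 2 * α))

/-- The ratio `[r^{-(n-2α)(1-q)} ∫_{B(0,r)} |y|^{-(n-2α)q} dσ] / [∫_{|y|≥r} |y|^{-(n-2α)} dσ]`. -/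
noncomputable def ratioFn {n : ℕ} (α q : ℝ)
    (σ : Measure (EuclideanSpace ℝ (Fin n))) (r : ℝ) : ENNReal :=
  (∫⁻ y in ball (0 : EuclideanSpace ℝ (Fin n)) r,
      (ENNReal.ofReal (‖y‖ ^ (((n : ℝ) - 2 * α) * q)))⁻¹ ∂σ) /
    ENNReal.ofReal (r ^ (((n : ℝ) - 2 * α) * (1 - q))) /
    (∫⁻ y in {y : EuclideanSpace ℝ (Fin n) | r ≤ ‖y‖},
      (ENNReal.ofReal (‖y‖ ^ ((n : ℝ) - 2 * α)))⁻¹ ∂σ)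

/-!
Write `I_s σ` for the Riesz potential with kernel `|x - y|^{-s}`, `N(ρ)` for the scaled inner moment
`ρ^{-s(1-q)} ∫_{|y|<ρ} |y|^{-sq} dσ(y)`, `T(ρ)` for the tail `∫_{|y|≥ρ} |y|^{-s} dσ(y)`, and
`P(ρ) = ∫ min(ρ^{-s}, |y|^{-s}) dσ(y)`.

By Tonelli, the average of `I_s σ` over a ball `B(x₀, ρ)` with `|x₀| = 2ρ` is the `σ`-integral of
the Riesz potential of the normalised Haar measure on that ball, which is at most
`C min(ρ^{-s}, |y|^{-s})` at `y`. So some `x` with `ρ < |x| < 3ρ` satisfies `I_s σ(x) ≤ C P(ρ)`, and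
the hypothesis at this `x` becomes `N(ρ) ≤ M P(ρ)`. Splitting `P(ρ)` at radius `κρ` gives
`P(ρ) ≤ κ^{sq} N(ρ) + T(κρ)`, and for `κ` so small that `M κ^{sq} ≤ 1/2` the term in `N(ρ)` is
absorbed, leaving `N(ρ) ≤ 2 M T(κρ)`. Finally `N(κρ) ≤ κ^{-s(1-q)} N(ρ)`.
-/

/-- The Riesz kernel `|z|^{-s}`, with value `∞` at `z = 0` when `0 < s`. -/
noncomputable def rieszKernel {E : Type*} [Norm E] (s : ℝ) (z : E) : ENNReal :=
  (ENNReal.ofReal (‖z‖ ^ s))⁻¹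

/-- The Riesz potential of order `s`, `∫_0^∞ σ(B(x,r)) r^{-s} dr/r`; the paper's `I_{2α}` on `ℝⁿ` is
the case `s = n - 2α`. -/
noncomputable def rieszPotential {X : Type*} [PseudoMetricSpace X] [MeasurableSpace X] (s : ℝ)
    (σ : Measure X) (x : X) : ENNReal :=
  ∫⁻ r in Ioi (0 : ℝ), σ (ball x r) / ENNReal.ofReal (r ^ s) / ENNReal.ofReal r

section ExtendedReals

lemma le_two_mul_of_le_mul_add {a b ε : ENNReal} (ha : a ≠ ⊤) (hε : ε ≤ 2⁻¹)
    (h : a ≤ ε * a + b) : a ≤ 2 * b := by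
  have h_half : 2⁻¹ * a ≤ b := by
    have h_split : 2⁻¹ * a + 2⁻¹ * a ≤ 2⁻¹ * a + b := by
      rw [← add_mul, ENNReal.inv_two_add_inv_two, one_mul]
      exact h.trans (by gcongr)
    exact (ENNReal.add_le_add_iff_left (by finiteness)).1 h_split
  exact (ENNReal.inv_mul_le_iff two_ne_zero ENNReal.ofNat_ne_top).1 h_half

lemma exists_mul_ofReal_rpow_le {M ε : ENNReal} (hM : M ≠ ⊤) (hε : 0 < ε) {p : ℝ} (hp : 0 < p) :
    ∃ κ : ℝ, 0 < κ ∧ κ ≤ 1 ∧ M * ENNReal.ofReal (κ ^ p) ≤ ε := by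
  have h_lim :
      Tendsto (fun κ : ℝ ↦ M * ENNReal.ofReal (κ ^ p)) (nhdsWithin 0 (Ioi 0)) (nhds 0) := by
    have h_cont : Continuous fun κ : ℝ ↦ M * ENNReal.ofReal (κ ^ p) :=
      (ENNReal.continuous_const_mul hM).comp
        (ENNReal.continuous_ofReal.comp (Real.continuous_rpow_const hp.le))
    simpa [Real.zero_rpow hp.ne'] using (h_cont.tendsto 0).mono_left nhdsWithin_le_nhds
  obtain ⟨κ, h_le, hκ, hκ_one⟩ :=
    ((h_lim.eventually (ge_mem_nhds hε)).and (Ioc_mem_nhdsGT one_pos)).exists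
  exact ⟨κ, hκ, hκ_one, h_le⟩

end ExtendedReals

section PowerIntegrals

variable {a s p : ℝ}

lemma lintegral_Ioi_rpow_neg_sub_one (hs : 0 < s) (ha : 0 ≤ a) :
    ∫⁻ t in Ioi a, ENNReal.ofReal (t ^ (-s - 1)) =
      ENNReal.ofReal s⁻¹ * (ENNReal.ofReal (a ^ s))⁻¹ := by
  rcases ha.eq_or_lt with rfl | ha
  · have h_nonneg : 0 ≤ᵐ[volume.restrict (Ioi (0 : ℝ))] fun t ↦ t ^ (-s - 1) := by
      filter_upwards [ae_restrict_mem measurableSet_Ioi] with t ht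
      exact Real.rpow_nonneg (le_of_lt ht) _
    have h_top : ∫⁻ t in Ioi (0 : ℝ), ENNReal.ofReal (t ^ (-s - 1)) = ⊤ := by
      by_contra h
      exact not_integrableOn_Ioi_rpow (-s - 1) ((lintegral_ofReal_ne_top_iff_integrable
        (by fun_prop) h_nonneg).1 h)
    simp [h_top, Real.zero_rpow hs.ne', ENNReal.mul_top, hs]
  · rw [← ofReal_integral_eq_lintegral_ofReal (integrableOn_Ioi_rpow_of_lt (by linarith) ha),
      integral_Ioi_rpow_of_lt (by linarith) ha, sub_add_cancel, neg_div_neg_eq,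
      ← ENNReal.ofReal_inv_of_pos (by positivity), ← ENNReal.ofReal_mul (by positivity),
      Real.rpow_neg ha.le, div_eq_inv_mul]
    filter_upwards [ae_restrict_mem measurableSet_Ioi] with t ht
    exact Real.rpow_nonneg (ha.trans ht).le _

lemma lintegral_Ioc_zero_rpow_sub_one (hp : 0 < p) (ha : 0 ≤ a) :
    ∫⁻ t in Ioc 0 a, ENNReal.ofReal (t ^ (p - 1)) = ENNReal.ofReal (a ^ p / p) := by
  rw [← ofReal_integral_eq_lintegral_ofReal, ← intervalIntegral.integral_of_le ha,
    integral_rpow (Or.inl (by linarith)), sub_add_cancel, Real.zero_rpow hp.ne', sub_zero]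
  · exact (intervalIntegrable_iff_integrableOn_Ioc_of_le ha).1
      (intervalIntegral.intervalIntegrable_rpow' (by linarith))
  · filter_upwards [ae_restrict_mem measurableSet_Ioc] with t ht
    exact Real.rpow_nonneg ht.1.le _

end PowerIntegrals

section Kernel

lemma rieszKernel_anti {E F : Type*} [SeminormedAddGroup E] [Norm F] {s : ℝ} (hs : 0 ≤ s)
    {w : E} {z : F} (h : ‖w‖ ≤ ‖z‖) : rieszKernel s z ≤ rieszKernel s w := by
  unfold rieszKernel
  gcongr

lemma rieszKernel_norm {E : Type*} [SeminormedAddGroup E] (s : ℝ) (z : E) :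
    rieszKernel s ‖z‖ = rieszKernel s z := by
  rw [rieszKernel, rieszKernel, Real.norm_of_nonneg (norm_nonneg z)]

lemma rieszKernel_sub_comm {E : Type*} [SeminormedAddGroup E] (s : ℝ) (x y : E) :
    rieszKernel s (x - y) = rieszKernel s (y - x) := by
  simp only [rieszKernel, norm_sub_rev]

lemma rieszKernel_ne_top {E : Type*} [NormedAddGroup E] (s : ℝ) {z : E} (hz : z ≠ 0) :
    rieszKernel s z ≠ ⊤ :=
  ENNReal.inv_ne_top.2 (ENNReal.ofReal_pos.2 (Real.rpow_pos_of_pos (norm_pos_iff.2 hz) s)).ne'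

lemma rieszKernel_add {E : Type*} [NormedAddGroup E] (s t : ℝ) {z : E} (hz : z ≠ 0) :
    rieszKernel (s + t) z = rieszKernel s z * rieszKernel t z := by
  have hz : 0 < ‖z‖ := norm_pos_iff.2 hz
  unfold rieszKernel
  rw [Real.rpow_add hz, ENNReal.ofReal_mul (by positivity),
    ENNReal.mul_inv (Or.inr ENNReal.ofReal_ne_top) (Or.inl ENNReal.ofReal_ne_top)]

lemma ofReal_rpow_mul_rieszKernel_mul {κ : ℝ} (hκ : 0 < κ) (s r : ℝ) :
    ENNReal.ofReal (κ ^ s) * rieszKernel s (κ * r) = rieszKernel s r := by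
  have hκs : ENNReal.ofReal (κ ^ s) ≠ 0 := (ENNReal.ofReal_pos.2 (by positivity)).ne'
  unfold rieszKernel
  rw [norm_mul, Real.norm_of_nonneg hκ.le, Real.mul_rpow hκ.le (norm_nonneg r),
    ENNReal.ofReal_mul (by positivity),
    ENNReal.mul_inv (Or.inr ENNReal.ofReal_ne_top) (Or.inl ENNReal.ofReal_ne_top),
    ENNReal.mul_inv_cancel_left hκs ENNReal.ofReal_ne_top]

end Kernel

section Potential

lemma rieszPotential_eq_lintegral_rpow {X : Type*} [PseudoMetricSpace X] [MeasurableSpace X]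
    (s : ℝ) (σ : Measure X) (x : X) :
    rieszPotential s σ x =
      ∫⁻ t in Ioi (0 : ℝ), ENNReal.ofReal (t ^ (-s - 1)) * σ (ball x t) := by
  refine setLIntegral_congr_fun measurableSet_Ioi fun t (ht : 0 < t) ↦ ?_
  have h_weight : ENNReal.ofReal (t ^ (-s - 1)) =
      (ENNReal.ofReal (t ^ s))⁻¹ * (ENNReal.ofReal t)⁻¹ := by
    rw [Real.rpow_sub_one ht.ne', Real.rpow_neg ht.le, div_eq_mul_inv,
      ENNReal.ofReal_mul (by positivity), ENNReal.ofReal_inv_of_pos ht,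
      ENNReal.ofReal_inv_of_pos (by positivity)]
  simp only [h_weight, div_eq_mul_inv]
  ring

lemma lintegral_Ioi_rpow_mul_measure_ball_le {X : Type*} [PseudoMetricSpace X] [MeasurableSpace X]
    {s ρ : ℝ} (hs : 0 < s) (σ : Measure X) (hρ : 0 ≤ ρ) (x : X) :
    ∫⁻ t in Ioi ρ, ENNReal.ofReal (t ^ (-s - 1)) * σ (ball x t) ≤
      ENNReal.ofReal s⁻¹ * rieszKernel s ρ * σ univ := by
  calc ∫⁻ t in Ioi ρ, ENNReal.ofReal (t ^ (-s - 1)) * σ (ball x t)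
      ≤ ∫⁻ t in Ioi ρ, ENNReal.ofReal (t ^ (-s - 1)) * σ univ := by
        gcongr
        exact subset_univ _
    _ = ENNReal.ofReal s⁻¹ * rieszKernel s ρ * σ univ := by
        rw [lintegral_mul_const _ (by fun_prop), lintegral_Ioi_rpow_neg_sub_one hs hρ,
          rieszKernel, Real.norm_of_nonneg hρ]

variable {E : Type*} [NormedAddCommGroup E] [MeasurableSpace E] {s : ℝ}

@[fun_prop]
lemma measurable_rieszKernel [OpensMeasurableSpace E] (s : ℝ) :
    Measurable (rieszKernel s : E → ENNReal) := by
  unfold rieszKernel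
  fun_prop

lemma rieszPotential_eq_lintegral_rieszKernel [OpensMeasurableSpace E] (hs : 0 < s) (σ : Measure E)
    [SFinite σ] (x : E) :
    rieszPotential s σ x = ENNReal.ofReal s⁻¹ * ∫⁻ y, rieszKernel s (x - y) ∂σ := by
  let F (t : ℝ) (y : E) : ENNReal := if dist y x < t then ENNReal.ofReal (t ^ (-s - 1)) else 0
  have hF : Measurable (Function.uncurry F) :=
    Measurable.ite (measurableSet_lt (by fun_prop) (by fun_prop)) (by fun_prop) measurable_const
  have h_ball (t : ℝ) : ∫⁻ y, F t y ∂σ = ENNReal.ofReal (t ^ (-s - 1)) * σ (ball x t) := by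
    rw [← lintegral_indicator_const measurableSet_ball]
    simp only [F, Set.indicator, mem_ball]
  have h_kernel (y : E) :
      ∫⁻ t in Ioi (0 : ℝ), F t y = ENNReal.ofReal s⁻¹ * rieszKernel s (x - y) := by
    calc ∫⁻ t in Ioi (0 : ℝ), F t y
        = ∫⁻ t in Ioi (0 : ℝ),
            (Ioi (dist y x)).indicator (fun t ↦ ENNReal.ofReal (t ^ (-s - 1))) t := by
          simp only [F, indicator_apply, mem_Ioi]
      _ = ∫⁻ t in Ioi (dist y x), ENNReal.ofReal (t ^ (-s - 1)) := by
          rw [setLIntegral_indicator measurableSet_Ioi,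
            inter_eq_left.2 (Ioi_subset_Ioi dist_nonneg)]
      _ = ENNReal.ofReal s⁻¹ * rieszKernel s (x - y) := by
          rw [lintegral_Ioi_rpow_neg_sub_one hs dist_nonneg, dist_eq_norm', rieszKernel]
  calc rieszPotential s σ x
      = ∫⁻ t in Ioi (0 : ℝ), ∫⁻ y, F t y ∂σ := by
        simp only [rieszPotential_eq_lintegral_rpow, h_ball]
    _ = ∫⁻ y, ENNReal.ofReal s⁻¹ * rieszKernel s (x - y) ∂σ := by
        rw [lintegral_lintegral_swap hF.aemeasurable]
        simp only [h_kernel]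
    _ = ENNReal.ofReal s⁻¹ * ∫⁻ y, rieszKernel s (x - y) ∂σ :=
        lintegral_const_mul' _ _ ENNReal.ofReal_ne_top

variable [BorelSpace E] [SecondCountableTopology E]

lemma measurable_rieszPotential (hs : 0 < s) (σ : Measure E) [SFinite σ] :
    Measurable (rieszPotential s σ) := by
  have h_prod : Measurable fun p : E × E ↦ rieszKernel s (p.1 - p.2) := by fun_prop
  simpa only [funext (rieszPotential_eq_lintegral_rieszKernel hs σ)]
    using h_prod.lintegral_prod_right'.const_mul _

lemma lintegral_rieszPotential_comm (hs : 0 < s) (σ ν : Measure E) [SFinite σ] [SFinite ν] :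
    ∫⁻ x, rieszPotential s σ x ∂ν = ∫⁻ y, rieszPotential s ν y ∂σ := by
  have h_prod : Measurable fun p : E × E ↦ rieszKernel s (p.1 - p.2) := by fun_prop
  simp only [rieszPotential_eq_lintegral_rieszKernel hs,
    lintegral_const_mul' _ _ ENNReal.ofReal_ne_top]
  rw [lintegral_lintegral_swap h_prod.aemeasurable]
  simp only [rieszKernel_sub_comm s]

end Potential

section HaarBall

variable {E : Type*} [NormedAddCommGroup E] [MeasurableSpace E] [BorelSpace E] {s ρ : ℝ}

lemma rieszPotential_restrict_ball_le_mul_rieszKernel (hs : 0 < s) (ν : Measure E) [SFinite ν]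
    {x₀ y : E} (hy : 2 * (‖x₀‖ + ρ) ≤ ‖y‖) :
    rieszPotential s (ν.restrict (ball x₀ ρ)) y ≤
      ENNReal.ofReal s⁻¹ * ENNReal.ofReal (2 ^ s) * rieszKernel s y * ν (ball x₀ ρ) := by
  have h_far (x : E) (hx : x ∈ ball x₀ ρ) :
      rieszKernel s (y - x) ≤ ENNReal.ofReal (2 ^ s) * rieszKernel s y := by
    have hx : ‖x - x₀‖ < ρ := mem_ball_iff_norm.1 hx
    have h_half : ‖2⁻¹ * ‖y‖‖ ≤ ‖y - x‖ := by
      rw [Real.norm_of_nonneg (by positivity)]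
      linarith [norm_sub_norm_le y x, norm_sub_norm_le x x₀]
    calc rieszKernel s (y - x)
        ≤ rieszKernel s (2⁻¹ * ‖y‖) := rieszKernel_anti hs.le h_half
      _ = ENNReal.ofReal (2 ^ s) * rieszKernel s (2 * (2⁻¹ * ‖y‖)) :=
          (ofReal_rpow_mul_rieszKernel_mul two_pos s _).symm
      _ = ENNReal.ofReal (2 ^ s) * rieszKernel s y := by
          rw [mul_inv_cancel_left₀ two_ne_zero, rieszKernel_norm]
  calc rieszPotential s (ν.restrict (ball x₀ ρ)) y
      = ENNReal.ofReal s⁻¹ * ∫⁻ x in ball x₀ ρ, rieszKernel s (y - x) ∂ν :=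
        rieszPotential_eq_lintegral_rieszKernel hs _ y
    _ ≤ ENNReal.ofReal s⁻¹ * ∫⁻ _ in ball x₀ ρ, ENNReal.ofReal (2 ^ s) * rieszKernel s y ∂ν := by
        gcongr _ * ?_
        exact setLIntegral_mono' measurableSet_ball h_far
    _ = ENNReal.ofReal s⁻¹ * ENNReal.ofReal (2 ^ s) * rieszKernel s y * ν (ball x₀ ρ) := by
        rw [setLIntegral_const]
        ring

variable [NormedSpace ℝ E] [FiniteDimensional ℝ E]

lemma addHaar_ball_eq_rpow_mul_rieszKernel_mul (μ : Measure E) [μ.IsAddHaarMeasure] {t : ℝ}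
    (ht : 0 < t) (hρ : 0 < ρ) (x y : E) :
    μ (ball y t) =
      ENNReal.ofReal (t ^ (Module.finrank ℝ E : ℝ)) *
        (rieszKernel (Module.finrank ℝ E) ρ * μ (ball x ρ)) := by
  have h_scale := Measure.addHaar_ball_mul_of_pos μ y (div_pos ht hρ) ρ
  rw [div_mul_cancel₀ t hρ.ne', ← Measure.addHaar_ball_center μ x] at h_scale
  rw [h_scale, rieszKernel, Real.norm_of_nonneg hρ.le, Real.rpow_natCast, Real.rpow_natCast,
    div_pow, ENNReal.ofReal_div_of_pos (by positivity), div_eq_mul_inv, mul_assoc]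

lemma lintegral_Ioc_rpow_mul_addHaar_ball (μ : Measure E) [μ.IsAddHaarMeasure]
    (hsd : s < Module.finrank ℝ E) (hρ : 0 < ρ) (x y : E) :
    ∫⁻ t in Ioc 0 ρ, ENNReal.ofReal (t ^ (-s - 1)) * μ (ball y t) =
      ENNReal.ofReal (Module.finrank ℝ E - s)⁻¹ * rieszKernel s ρ * μ (ball x ρ) := by
  set d : ℝ := (Module.finrank ℝ E : ℝ)
  have hds : 0 < d - s := sub_pos.2 hsd
  have h_add : rieszKernel d ρ = rieszKernel (d - s) ρ * rieszKernel s ρ := by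
    rw [← rieszKernel_add _ _ hρ.ne', sub_add_cancel]
  have h_cancel : ENNReal.ofReal (ρ ^ (d - s)) * rieszKernel (d - s) ρ = 1 := by
    rw [rieszKernel, Real.norm_of_nonneg hρ.le, ENNReal.mul_inv_cancel
      (ENNReal.ofReal_pos.2 (by positivity)).ne' ENNReal.ofReal_ne_top]
  calc ∫⁻ t in Ioc 0 ρ, ENNReal.ofReal (t ^ (-s - 1)) * μ (ball y t)
      = ∫⁻ t in Ioc 0 ρ, ENNReal.ofReal (t ^ (d - s - 1)) *
          (rieszKernel d ρ * μ (ball x ρ)) := by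
        refine setLIntegral_congr_fun measurableSet_Ioc fun t ht ↦ ?_
        rw [addHaar_ball_eq_rpow_mul_rieszKernel_mul μ ht.1 hρ x y, ← mul_assoc,
          ← ENNReal.ofReal_mul (Real.rpow_nonneg ht.1.le _), ← Real.rpow_add ht.1,
          neg_sub_left, ← sub_eq_neg_add, sub_add_eq_sub_sub_swap]
    _ = ENNReal.ofReal (d - s)⁻¹ * (ENNReal.ofReal (ρ ^ (d - s)) * rieszKernel (d - s) ρ) *
          rieszKernel s ρ * μ (ball x ρ) := by
        rw [lintegral_mul_const _ (by fun_prop), lintegral_Ioc_zero_rpow_sub_one hds hρ.le, h_add,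
          div_eq_inv_mul, ENNReal.ofReal_mul (by positivity)]
        ring
    _ = ENNReal.ofReal (d - s)⁻¹ * rieszKernel s ρ * μ (ball x ρ) := by rw [h_cancel, mul_one]

lemma rieszPotential_restrict_ball_le (μ : Measure E) [μ.IsAddHaarMeasure] (hs : 0 < s)
    (hsd : s < Module.finrank ℝ E) (hρ : 0 < ρ) (x₀ y : E) :
    rieszPotential s (μ.restrict (ball x₀ ρ)) y ≤
      ENNReal.ofReal ((Module.finrank ℝ E - s)⁻¹ + s⁻¹) * rieszKernel s ρ * μ (ball x₀ ρ) := by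
  rw [rieszPotential_eq_lintegral_rpow, ← Ioc_union_Ioi_eq_Ioi hρ.le,
    ENNReal.ofReal_add (inv_nonneg.2 (sub_nonneg.2 hsd.le)) (inv_nonneg.2 hs.le), add_mul, add_mul]
  refine (lintegral_union_le _ _ _).trans (add_le_add ?_ ?_)
  · rw [← lintegral_Ioc_rpow_mul_addHaar_ball μ hsd hρ x₀ y]
    gcongr
    exact Measure.restrict_le_self
  · rw [← Measure.restrict_apply_univ (ball x₀ ρ)]
    exact lintegral_Ioi_rpow_mul_measure_ball_le hs _ hρ.le y

end HaarBall

/-- The potential `∫ min(R^{-s}, |y|^{-s}) dσ(y) = R^{-s} σ(B(0,R)) + ∫_{|y|≥R} |y|^{-s} dσ(y)`,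
which for radial `σ` is comparable to the Riesz potential of order `s` on the sphere `|x| = R`. -/
noncomputable def truncatedPotential {E : Type*} [Norm E] [MeasurableSpace E] (s : ℝ)
    (σ : Measure E) (R : ℝ) : ENNReal :=
  ∫⁻ y, min (rieszKernel s R) (rieszKernel s y) ∂σ

/-- The tail `∫_{|y|≥r} |y|^{-s} dσ(y)`. -/
noncomputable def tailPotential {E : Type*} [Norm E] [MeasurableSpace E] (s : ℝ)
    (σ : Measure E) (r : ℝ) : ENNReal :=
  ∫⁻ y in {y | r ≤ ‖y‖}, rieszKernel s y ∂σ

/-- The scaled inner moment `r^{-s(1-q)} ∫_{|y|<r} |y|^{-sq} dσ(y)`. -/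
noncomputable def innerMoment {E : Type*} [SeminormedAddCommGroup E] [MeasurableSpace E] (s q : ℝ)
    (σ : Measure E) (r : ℝ) : ENNReal :=
  (∫⁻ y in ball (0 : E) r, rieszKernel (s * q) y ∂σ) / ENNReal.ofReal (r ^ (s * (1 - q)))

/-- The potential `Kσ(x) = |x|^{-s} (∫_{|y|<|x|} |y|^{-sq} dσ(y))^{1/(1-q)}` on a normed space. -/
noncomputable def innerPotential {E : Type*} [SeminormedAddCommGroup E] [MeasurableSpace E]
    (s q : ℝ) (σ : Measure E) (x : E) : ENNReal :=
  (∫⁻ y in ball (0 : E) ‖x‖, rieszKernel (s * q) y ∂σ) ^ (1 / (1 - q)) / ENNReal.ofReal (‖x‖ ^ s)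

section Average

variable {E : Type*} [NormedAddCommGroup E] [NormedSpace ℝ E] [FiniteDimensional ℝ E]
  [MeasurableSpace E] [BorelSpace E] {s : ℝ}

lemma exists_rieszPotential_restrict_ball_le (hs : 0 < s) (hsd : s < Module.finrank ℝ E) :
    ∃ C : ENNReal, C ≠ ⊤ ∧ ∀ (μ : Measure E) [μ.IsAddHaarMeasure] (ρ : ℝ) (x₀ y : E),
      0 < ρ → ‖x₀‖ = 2 * ρ →
        rieszPotential s (μ.restrict (ball x₀ ρ)) y ≤
          C * min (rieszKernel s ρ) (rieszKernel s y) * μ (ball x₀ ρ) := by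
  set A := ENNReal.ofReal ((Module.finrank ℝ E - s)⁻¹ + s⁻¹)
  set B := ENNReal.ofReal s⁻¹ * ENNReal.ofReal (2 ^ s)
  set L := ENNReal.ofReal (6 ^ s)
  refine ⟨A * L + A + B, by finiteness, fun μ _ ρ x₀ y hρ hx₀ ↦ ?_⟩
  have h_near := rieszPotential_restrict_ball_le μ hs hsd hρ x₀ y
  rcases le_total (rieszKernel s ρ) (rieszKernel s y) with h | h
  · rw [min_eq_left h]
    refine h_near.trans ?_
    gcongr
    exact le_add_right le_add_self
  rw [min_eq_right h]
  rcases le_total (6 * ρ) ‖y‖ with hy | hy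
  · refine (rieszPotential_restrict_ball_le_mul_rieszKernel hs μ (by linarith)).trans ?_
    gcongr
    exact le_add_self
  · have h_comparable : rieszKernel s ρ ≤ L * rieszKernel s y := by
      rw [← ofReal_rpow_mul_rieszKernel_mul (by norm_num : (0 : ℝ) < 6) s ρ]
      gcongr
      exact rieszKernel_anti hs.le (hy.trans (le_abs_self _))
    calc _ ≤ A * rieszKernel s ρ * μ (ball x₀ ρ) := h_near
      _ ≤ A * (L * rieszKernel s y) * μ (ball x₀ ρ) := by gcongr
      _ = A * L * rieszKernel s y * μ (ball x₀ ρ) := by rw [← mul_assoc A L]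
      _ ≤ _ := by
        gcongr
        rw [add_assoc]
        exact le_self_add

lemma exists_rieszPotential_le_truncatedPotential (hs : 0 < s) (hsd : s < Module.finrank ℝ E) :
    ∃ C : ENNReal, C ≠ ⊤ ∧ ∀ (σ : Measure E) [SFinite σ] (ρ : ℝ), 0 < ρ →
      ∃ x : E, ρ < ‖x‖ ∧ ‖x‖ < 3 * ρ ∧ rieszPotential s σ x ≤ C * truncatedPotential s σ ρ := by
  obtain ⟨C, hC, h_haar⟩ := exists_rieszPotential_restrict_ball_le (E := E) hs hsd
  refine ⟨C, hC, fun σ _ ρ hρ ↦ ?_⟩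
  have : Nontrivial E := Module.nontrivial_of_finrank_pos (R := ℝ) (by exact_mod_cast hs.trans hsd)
  obtain ⟨x₀, hx₀⟩ := exists_norm_eq E (by positivity : 0 ≤ 2 * ρ)
  let μ : Measure E := Measure.addHaar
  have hμ_pos : μ (ball x₀ ρ) ≠ 0 := (measure_ball_pos μ x₀ hρ).ne'
  have hμ_top : μ (ball x₀ ρ) ≠ ⊤ := measure_ball_lt_top.ne
  have h_average : ⨍⁻ x in ball x₀ ρ, rieszPotential s σ x ∂μ ≤ C * truncatedPotential s σ ρ := by
    rw [setLAverage_eq, lintegral_rieszPotential_comm hs]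
    refine ENNReal.div_le_of_le_mul ?_
    calc ∫⁻ y, rieszPotential s (μ.restrict (ball x₀ ρ)) y ∂σ
        ≤ ∫⁻ y, C * min (rieszKernel s ρ) (rieszKernel s y) * μ (ball x₀ ρ) ∂σ :=
          lintegral_mono fun y ↦ h_haar μ ρ x₀ y hρ hx₀
      _ = C * truncatedPotential s σ ρ * μ (ball x₀ ρ) := by
          rw [lintegral_mul_const' _ _ hμ_top, lintegral_const_mul' _ _ hC, truncatedPotential]
  obtain ⟨x, hx, h_le⟩ :=
    exists_le_setLAverage hμ_pos hμ_top (measurable_rieszPotential hs σ).aemeasurable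
  have hx : ‖x - x₀‖ < ρ := mem_ball_iff_norm.1 hx
  have h_lower := norm_sub_norm_le x₀ x
  rw [norm_sub_rev] at h_lower
  exact ⟨x, by linarith, by linarith [norm_sub_norm_le x x₀], h_le.trans h_average⟩

end Average

section Absorption

variable {E : Type*} [NormedAddCommGroup E] [MeasurableSpace E] {s q ρ r κ : ℝ} {σ : Measure E}

lemma rieszKernel_mul_measure_ball_le [OpensMeasurableSpace E] {p : ℝ} (hp : 0 ≤ p)
    (σ : Measure E) (r : ℝ) :
    rieszKernel p r * σ (ball 0 r) ≤ ∫⁻ y in ball (0 : E) r, rieszKernel p y ∂σ := by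
  rw [← setLIntegral_const]
  refine setLIntegral_mono' measurableSet_ball fun y hy ↦ rieszKernel_anti hp ?_
  exact (mem_ball_zero_iff.1 hy).le.trans (le_abs_self r)

lemma truncatedPotential_le_add_tailPotential [OpensMeasurableSpace E] (s : ℝ) (σ : Measure E)
    (ρ r : ℝ) :
    truncatedPotential s σ ρ ≤ rieszKernel s ρ * σ (ball 0 r) + tailPotential s σ r := by
  have h_compl : (ball (0 : E) r)ᶜ = {y | r ≤ ‖y‖} := by ext; simp
  rw [truncatedPotential, ← lintegral_add_compl _ (measurableSet_ball (x := (0 : E)) (ε := r)),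
    h_compl, tailPotential, ← setLIntegral_const]
  gcongr
  · exact min_le_left _ _
  · exact min_le_right _ _

lemma innerMoment_eq_rieszKernel_mul (hr : 0 ≤ r) :
    innerMoment s q σ r =
      rieszKernel (s * (1 - q)) r * ∫⁻ y in ball (0 : E) r, rieszKernel (s * q) y ∂σ := by
  rw [innerMoment, rieszKernel, Real.norm_of_nonneg hr, ENNReal.div_eq_inv_mul]

lemma innerMoment_le_of_le_mul (hs : 0 ≤ s) (hq : q ≤ 1) (hρ : 0 < ρ) (hρr : ρ ≤ r) {L : ℝ}
    (hrL : r ≤ L * ρ) :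
    innerMoment s q σ ρ ≤ ENNReal.ofReal (L ^ (s * (1 - q))) * innerMoment s q σ r := by
  have hp : 0 ≤ s * (1 - q) := mul_nonneg hs (sub_nonneg.2 hq)
  have hr : 0 ≤ r := hρ.le.trans hρr
  have hL : 0 < L := pos_of_mul_pos_left (hρ.trans_le (hρr.trans hrL)) hρ.le
  rw [innerMoment_eq_rieszKernel_mul hρ.le, innerMoment_eq_rieszKernel_mul hr, ← mul_assoc,
    ← ofReal_rpow_mul_rieszKernel_mul hL _ ρ]
  gcongr
  refine rieszKernel_anti hp ?_
  rw [Real.norm_of_nonneg hr]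
  exact hrL.trans (le_abs_self _)

lemma truncatedPotential_le_innerMoment_add_tailPotential [OpensMeasurableSpace E] (hs : 0 ≤ s)
    (hq : 0 ≤ q) (hρ : 0 < ρ) (hκ : 0 < κ) (hκ_one : κ ≤ 1) (σ : Measure E) :
    truncatedPotential s σ ρ ≤
      ENNReal.ofReal (κ ^ (s * q)) * innerMoment s q σ ρ + tailPotential s σ (κ * ρ) := by
  have h_factor : rieszKernel s ρ = ENNReal.ofReal (κ ^ (s * q)) *
      rieszKernel (s * (1 - q)) ρ * rieszKernel (s * q) (κ * ρ) := by
    rw [mul_right_comm, ofReal_rpow_mul_rieszKernel_mul hκ, ← rieszKernel_add _ _ hρ.ne']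
    ring_nf
  refine (truncatedPotential_le_add_tailPotential s σ ρ (κ * ρ)).trans ?_
  rw [h_factor, innerMoment_eq_rieszKernel_mul hρ.le, mul_assoc, mul_assoc]
  gcongr
  calc rieszKernel (s * q) (κ * ρ) * σ (ball 0 (κ * ρ))
      ≤ ∫⁻ y in ball (0 : E) (κ * ρ), rieszKernel (s * q) y ∂σ :=
        rieszKernel_mul_measure_ball_le (mul_nonneg hs hq) σ _
    _ ≤ ∫⁻ y in ball (0 : E) ρ, rieszKernel (s * q) y ∂σ :=
        lintegral_mono_set (ball_subset_ball (mul_le_of_le_one_left hρ.le hκ_one))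

lemma innerMoment_norm_le_of_innerPotential_le (hq1 : q < 1) {c : ENNReal} {x : E}
    (h : innerPotential s q σ x ≤ c * rieszPotential s σ x ^ (1 / (1 - q))) :
    innerMoment s q σ ‖x‖ ≤ c ^ (1 - q) * rieszPotential s σ x := by
  have hp : 0 < 1 - q := sub_pos.2 hq1
  have h_rpow := ENNReal.rpow_le_rpow h hp.le
  rwa [innerPotential, ENNReal.div_rpow_of_nonneg _ _ hp.le, ENNReal.mul_rpow_of_nonneg _ _ hp.le,
    ← ENNReal.rpow_mul, ← ENNReal.rpow_mul, one_div_mul_cancel hp.ne', ENNReal.rpow_one,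
    ENNReal.rpow_one, ENNReal.ofReal_rpow_of_nonneg (by positivity) hp.le,
    ← Real.rpow_mul (norm_nonneg x)] at h_rpow

end Absorption

section Main

variable {E : Type*} [NormedAddCommGroup E] [NormedSpace ℝ E] [FiniteDimensional ℝ E]
  [MeasurableSpace E] [BorelSpace E] {s q : ℝ} {σ : Measure E}

lemma exists_innerMoment_le_truncatedPotential (hs : 0 < s) (hsd : s < Module.finrank ℝ E)
    (hq1 : q < 1) [SFinite σ] {c : ENNReal} (hc : c ≠ ⊤) {δ : ℝ}
    (hyp : ∀ x : E, x ≠ 0 → ‖x‖ < δ →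
      innerPotential s q σ x ≤ c * rieszPotential s σ x ^ (1 / (1 - q))) :
    ∃ M : ENNReal, M ≠ ⊤ ∧
      ∀ ρ, 0 < ρ → 3 * ρ < δ → innerMoment s q σ ρ ≤ M * truncatedPotential s σ ρ := by
  obtain ⟨C, hC, h_exists⟩ := exists_rieszPotential_le_truncatedPotential (E := E) hs hsd
  have hcq : c ^ (1 - q) ≠ ⊤ := ENNReal.rpow_ne_top_of_nonneg (sub_nonneg.2 hq1.le) hc
  refine ⟨ENNReal.ofReal (3 ^ (s * (1 - q))) * (c ^ (1 - q) * C), by finiteness,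
    fun ρ hρ hρδ ↦ ?_⟩
  obtain ⟨x, hx_lower, hx_upper, h_riesz⟩ := h_exists σ ρ hρ
  have hx : x ≠ 0 := norm_pos_iff.1 (hρ.trans hx_lower)
  calc innerMoment s q σ ρ
      ≤ ENNReal.ofReal (3 ^ (s * (1 - q))) * innerMoment s q σ ‖x‖ :=
        innerMoment_le_of_le_mul hs.le hq1.le hρ hx_lower.le hx_upper.le
    _ ≤ ENNReal.ofReal (3 ^ (s * (1 - q))) * (c ^ (1 - q) * rieszPotential s σ x) := by
        gcongr
        exact innerMoment_norm_le_of_innerPotential_le hq1 (hyp x hx (hx_upper.trans hρδ))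
    _ ≤ ENNReal.ofReal (3 ^ (s * (1 - q))) * (c ^ (1 - q) * (C * truncatedPotential s σ ρ)) := by
        gcongr
    _ = _ := by ring

lemma innerMoment_le_two_mul_tailPotential [IsLocallyFiniteMeasure σ] (hs : 0 ≤ s) (hq : 0 ≤ q)
    {M : ENNReal} (hM : M ≠ ⊤) {ρ κ : ℝ} (hρ : 0 < ρ) (hκ : 0 < κ) (hκ_one : κ ≤ 1)
    (hκM : M * ENNReal.ofReal (κ ^ (s * q)) ≤ 2⁻¹) (h_tail : tailPotential s σ (κ * ρ) ≠ ⊤)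
    (h : innerMoment s q σ ρ ≤ M * truncatedPotential s σ ρ) :
    innerMoment s q σ ρ ≤ 2 * (M * tailPotential s σ (κ * ρ)) := by
  have h_trunc : truncatedPotential s σ ρ ≠ ⊤ := by
    have h_kernel : rieszKernel s ρ ≠ ⊤ := rieszKernel_ne_top s hρ.ne'
    have h_ball : σ (ball 0 (κ * ρ)) ≠ ⊤ := measure_ball_lt_top.ne
    exact ne_top_of_le_ne_top (by finiteness)
      (truncatedPotential_le_add_tailPotential s σ ρ (κ * ρ))
  refine le_two_mul_of_le_mul_add (ne_top_of_le_ne_top (by finiteness) h) hκM ?_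
  calc innerMoment s q σ ρ
      ≤ M * truncatedPotential s σ ρ := h
    _ ≤ M * (ENNReal.ofReal (κ ^ (s * q)) * innerMoment s q σ ρ + tailPotential s σ (κ * ρ)) := by
        gcongr
        exact truncatedPotential_le_innerMoment_add_tailPotential hs hq hρ hκ hκ_one σ
    _ = M * ENNReal.ofReal (κ ^ (s * q)) * innerMoment s q σ ρ +
          M * tailPotential s σ (κ * ρ) := by ring

end Main

theorem stmt13_general {E : Type*} [NormedAddCommGroup E] [NormedSpace ℝ E] [FiniteDimensional ℝ E]
    [MeasurableSpace E] [BorelSpace E] {s q : ℝ} (σ : Measure E) [IsLocallyFiniteMeasure σ]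
    (hs : 0 < s) (hsd : s < Module.finrank ℝ E) (hq : 0 < q) (hq1 : q < 1) {c : ENNReal}
    (hc : c ≠ ⊤) {δ : ℝ} (hδ : 0 < δ)
    (hyp : ∀ x : E, x ≠ 0 → ‖x‖ < δ →
      innerPotential s q σ x ≤ c * rieszPotential s σ x ^ (1 / (1 - q))) :
    limsup (fun r ↦ innerMoment s q σ r / tailPotential s σ r)
      (nhdsWithin (0 : ℝ) (Ioi 0)) < ⊤ := by
  obtain ⟨M, hM, h_moment⟩ := exists_innerMoment_le_truncatedPotential hs hsd hq1 hc hyp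
  obtain ⟨κ, hκ, hκ_one, hκM⟩ :=
    exists_mul_ofReal_rpow_le hM (ENNReal.inv_pos.2 (ENNReal.ofNat_ne_top (n := 2))) (mul_pos hs hq)
  set A := ENNReal.ofReal (κ⁻¹ ^ (s * (1 - q)))
  suffices h_bound : ∀ᶠ r in nhdsWithin (0 : ℝ) (Ioi 0),
      innerMoment s q σ r / tailPotential s σ r ≤ A * (2 * M) from
    (limsup_le_of_le (by isBoundedDefault) h_bound).trans_lt (by finiteness)
  filter_upwards [Ioo_mem_nhdsGT (by positivity : 0 < κ * (δ / 3))] with r ⟨hr, hrδ⟩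
  obtain ⟨ρ, rfl⟩ : ∃ ρ, r = κ * ρ := ⟨κ⁻¹ * r, (mul_inv_cancel_left₀ hκ.ne' r).symm⟩
  have hρ : 0 < ρ := pos_of_mul_pos_right hr hκ.le
  have hρδ : ρ < δ / 3 := lt_of_mul_lt_mul_left hrδ hκ.le
  by_cases h_tail : tailPotential s σ (κ * ρ) = ⊤
  · simp [h_tail]
  refine ENNReal.div_le_of_le_mul ?_
  calc innerMoment s q σ (κ * ρ)
      ≤ A * innerMoment s q σ ρ :=
        innerMoment_le_of_le_mul hs.le hq1.le hr (mul_le_of_le_one_left hρ.le hκ_one)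
          (inv_mul_cancel_left₀ hκ.ne' ρ).ge
    _ ≤ A * (2 * (M * tailPotential s σ (κ * ρ))) := by
        gcongr
        exact innerMoment_le_two_mul_tailPotential hs.le hq.le hM hρ hκ hκ_one hκM h_tail
          (h_moment ρ hρ (by linarith))
    _ = A * (2 * M) * tailPotential s σ (κ * ρ) := by ring

theorem stmt13 {n : ℕ} (α q : ℝ) (σ : Measure (EuclideanSpace ℝ (Fin n)))
    [IsLocallyFiniteMeasure σ]
    (hq : 0 < q) (hq1 : q < 1) (hα : 0 < α) (hαn : 2 * α < n)
    (hrad : ∀ e : EuclideanSpace ℝ (Fin n) ≃ₗᵢ[ℝ] EuclideanSpace ℝ (Fin n),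
      σ.map e = σ)
    (hyp : ∃ c : ENNReal, 0 < c ∧ c ≠ ⊤ ∧ ∃ δ : ℝ, 0 < δ ∧
      ∀ x : EuclideanSpace ℝ (Fin n), x ≠ 0 → ‖x‖ < δ →
        Kpot α q σ x ≤ c * (riesz2 α σ x) ^ (1 / (1 - q))) :
    limsup (ratioFn α q σ) (nhdsWithin (0:ℝ) (Ioi 0)) < ⊤ := by
  obtain ⟨c, -, hc, δ, hδ, hyp⟩ := hyp
  exact stmt13_general (s := n - 2 * α) σ (sub_pos.2 hαn) (by simpa using hα) hq hq1 hc hδ hyp
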